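/- In the block matrix setup, assume additionally that T₁ is tridiagonal ((T₁)_{ij} = 0 for |i−j| > 1) with positive subdiagonal entries (T₁)_{i+1,i} > 0 for i = 1,…,m−1, and let μ be a positive Borel measure on [0,∞) with ∫_{[0,∞)} 1/(1+t) dμ(t) < ∞. Define f₁(z) := ∫_{[0,∞)} (−δ(t) ε(t) / d(t)) · 1/(z+t) dμ(t) for z > 0. Then (−1)^{m+1} f₁ is a Stieltjes function: there exists a positive Borel measure ν on [0,∞) with ∫_{[0,∞)} 1/(1+t) dν(t) < ∞ such that (−1)^{m+1} f₁(z) = ∫_{[0,∞)} 1/(z+t) dν(t) for all z > 0. In particular, f₁ has constant sign on (0,∞) and |f₁| is monotonically decreasing on (0,∞). -/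

import Mathlib

open MeasureTheory Matrix

/-!
The density of `f₁` is, up to a factor, an off-diagonal resolvent entry of the coupled matrix `T`:
block elimination gives `-δ ε / d = -β x`, where `x` is the entry of `(T + t)⁻¹` in the row of `e₁`
in the second block and the first column. Since `(T + t)⁻¹ ≤ T⁻¹` in the Loewner order, the density
is bounded on `[0, ∞)`, so only its sign remains to be found. Elimination also gives `x = -β δ y`
with `y` in the last row of the first block and `y (1 - β² γ δ) = ε`; the factor `1 - β² γ δ` is
positive because it is the quotient of `γ` by a diagonal entry of `(T + t)⁻¹`. By Cramer's rule `ε`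
has the sign `(-1) ^ (m - 1)`, as the relevant minor is triangular with the subdiagonal of `T₁` on
its diagonal.
-/

section Stieltjes

/-- `f` is a Stieltjes function: on `(0, ∞)` it is the Stieltjes transform of a measure on
`[0, ∞)` integrating `1 / (1 + t)`. The representing measure lives on `ℝ`, and only its restriction
to `[0, ∞)` matters. -/
def IsStieltjes (f : ℝ → ℝ) : Prop :=
  ∃ ν : Measure ℝ, IntegrableOn (fun t => (1 + t)⁻¹) (Set.Ici 0) ν ∧
    ∀ z : ℝ, 0 < z → f z = ∫ t in Set.Ici (0 : ℝ), (z + t)⁻¹ ∂ν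

lemma inv_add_le_mul_inv_one_add {z t : ℝ} (hz : 0 < z) (ht : 0 ≤ t) :
    (z + t)⁻¹ ≤ (1 + z⁻¹) * (1 + t)⁻¹ := by
  rw [← div_eq_mul_inv, inv_le_comm₀ (by positivity) (by positivity), inv_div,
    div_le_iff₀ (by positivity)]
  have hzinv : z * z⁻¹ = 1 := mul_inv_cancel₀ hz.ne'
  have htz : 0 ≤ t * z⁻¹ := by positivity
  linarith

lemma integrableOn_inv_add {ν : Measure ℝ}
    (hν : IntegrableOn (fun t => (1 + t)⁻¹) (Set.Ici 0) ν) {z : ℝ} (hz : 0 < z) :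
    IntegrableOn (fun t => (z + t)⁻¹) (Set.Ici 0) ν := by
  refine (hν.const_mul (1 + z⁻¹)).mono' (by fun_prop) ?_
  filter_upwards [ae_restrict_mem measurableSet_Ici] with t (ht : 0 ≤ t)
  rw [Real.norm_of_nonneg (by positivity)]
  exact inv_add_le_mul_inv_one_add hz ht

namespace IsStieltjes

variable {f : ℝ → ℝ}

lemma congr {g : ℝ → ℝ} (hf : IsStieltjes f) (hfg : Set.EqOn f g (Set.Ioi 0)) :
    IsStieltjes g := by
  obtain ⟨ν, hν, hfν⟩ := hf
  exact ⟨ν, hν, fun z hz => (hfg hz).symm.trans (hfν z hz)⟩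

lemma nonneg (hf : IsStieltjes f) {z : ℝ} (hz : 0 < z) : 0 ≤ f z := by
  obtain ⟨ν, -, hfν⟩ := hf
  rw [hfν z hz]
  exact setIntegral_nonneg measurableSet_Ici fun _ ht => inv_nonneg.2 (add_nonneg hz.le ht)

lemma antitoneOn (hf : IsStieltjes f) : AntitoneOn f (Set.Ioi 0) := by
  obtain ⟨ν, hν, hfν⟩ := hf
  intro z₁ hz₁ z₂ hz₂ hz
  rw [hfν z₁ hz₁, hfν z₂ hz₂]
  exact setIntegral_mono_on (integrableOn_inv_add hν hz₂) (integrableOn_inv_add hν hz₁)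
    measurableSet_Ici fun _ ht => inv_anti₀ (add_pos_of_pos_of_nonneg hz₁ ht) (by gcongr)

lemma nonneg_or_nonpos_of_const_mul {c : ℝ} (hc : c ≠ 0) (hf : IsStieltjes fun z => c * f z) :
    (∀ z, 0 < z → 0 ≤ f z) ∨ ∀ z, 0 < z → f z ≤ 0 := by
  rcases hc.lt_or_gt with hneg | hpos
  · exact .inr fun z hz => nonpos_of_mul_nonneg_right (hf.nonneg hz) hneg
  · exact .inl fun z hz => nonneg_of_mul_nonneg_right (hf.nonneg hz) hpos

lemma antitoneOn_abs_of_const_mul {c : ℝ} (hc : c ≠ 0) (hf : IsStieltjes fun z => c * f z) :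
    AntitoneOn (fun z => |f z|) (Set.Ioi 0) := by
  intro z₁ hz₁ z₂ hz₂ hz
  refine le_of_mul_le_mul_left ?_ (abs_pos.2 hc)
  rw [← abs_mul, ← abs_mul, abs_of_nonneg (hf.nonneg hz₁), abs_of_nonneg (hf.nonneg hz₂)]
  exact hf.antitoneOn hz₁ hz₂ hz

end IsStieltjes

lemma isStieltjes_setIntegral_mul {μ : Measure ℝ} {w : ℝ → ℝ} (hw0 : ∀ t, 0 ≤ t → 0 ≤ w t)
    (hw : IntegrableOn (fun t => w t * (1 + t)⁻¹) (Set.Ici 0) μ) :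
    IsStieltjes fun z => ∫ t in Set.Ici (0 : ℝ), w t * (z + t)⁻¹ ∂μ := by
  have hmeas : AEMeasurable (fun t => (w t).toNNReal) (μ.restrict (Set.Ici 0)) := by
    refine AEMeasurable.real_toNNReal ?_
    refine (hw.aemeasurable.mul (by fun_prop : Measurable fun t : ℝ => 1 + t).aemeasurable).congr ?_
    filter_upwards [ae_restrict_mem measurableSet_Ici] with t (ht : 0 ≤ t)
    exact inv_mul_cancel_right₀ (by positivity) _
  have hsmul (z : ℝ) : Set.EqOn (fun t => (w t).toNNReal • (z + t)⁻¹)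
      (fun t => w t * (z + t)⁻¹) (Set.Ici 0) := fun t ht => by
    simp only [NNReal.smul_def, Real.coe_toNNReal _ (hw0 t ht), smul_eq_mul]
  refine ⟨μ.withDensity fun t => (w t).toNNReal, ?_, fun z _ => ?_⟩
  · rw [IntegrableOn, restrict_withDensity measurableSet_Ici,
      integrable_withDensity_iff_integrable_smul₀ hmeas]
    exact hw.congr_fun (hsmul 1).symm measurableSet_Ici
  · rw [setIntegral_withDensity_eq_setIntegral_smul₀ hmeas _ measurableSet_Ici]
    exact (setIntegral_congr_fun measurableSet_Ici (hsmul z)).symm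

end Stieltjes

section Resolvent

open scoped ComplexOrder in
lemma apply_mul_apply_le_of_posSemidef {ι 𝕜 : Type*} [RCLike 𝕜] {A : Matrix ι ι 𝕜}
    (hA : A.PosSemidef) (i j : ι) : A i j * A j i ≤ A i i * A j j := by
  have hdet := (hA.submatrix ![i, j]).det_nonneg
  rw [det_fin_two] at hdet
  exact sub_nonneg.1 hdet

variable {n : Type*} [DecidableEq n]

lemma posDef_add_smul_one {A : Matrix n n ℝ} (hA : A.PosDef) {t : ℝ} (ht : 0 ≤ t) :
    (A + t • 1).PosDef :=
  hA.add_posSemidef (PosSemidef.one.smul ht)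

variable [Fintype n]

lemma posSemidef_inv_sub_inv {K : Type*} [Field K] [PartialOrder K] [StarRing K]
    [StarOrderedRing K] {A B : Matrix n n K} (hA : A.PosDef) (hAB : (B - A).PosSemidef) :
    (A⁻¹ - B⁻¹).PosSemidef := by
  have hB : B.PosDef := by simpa using hA.add_posSemidef hAB
  let := hA.inv.isUnit.invertible
  let := hB.isUnit.invertible
  let := hA.isUnit.invertible
  -- Both differences are Schur complements of the same block matrix.
  have hblock : (fromBlocks B 1 1ᴴ A⁻¹).PosSemidef :=
    (PosDef.fromBlocks₂₂ B 1 hA.inv).2 (by simpa using hAB)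
  simpa using (PosDef.fromBlocks₁₁ 1 A⁻¹ hB).1 hblock

variable {A : Matrix n n ℝ}

lemma inv_add_smul_one_diag_le (hA : A.PosDef) {t : ℝ} (ht : 0 ≤ t) (i : n) :
    (A + t • 1)⁻¹ i i ≤ A⁻¹ i i := by
  have hsub : (A + t • 1 - A).PosSemidef := by simpa using PosSemidef.one.smul ht
  exact sub_nonneg.1 (posSemidef_inv_sub_inv hA hsub).diag_nonneg

lemma abs_inv_add_smul_one_apply_le (hA : A.PosDef) {t : ℝ} (ht : 0 ≤ t) (i j : n) :
    |(A + t • 1)⁻¹ i j| ≤ √(A⁻¹ i i * A⁻¹ j j) := by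
  have hinv := (posDef_add_smul_one hA ht).inv.posSemidef
  refine Real.abs_le_sqrt ?_
  calc (A + t • 1)⁻¹ i j ^ 2 ≤ (A + t • 1)⁻¹ i i * (A + t • 1)⁻¹ j j := by
        rw [sq]
        nth_rw 2 [← hinv.isHermitian.apply i j]
        exact apply_mul_apply_le_of_posSemidef hinv i j
    _ ≤ A⁻¹ i i * A⁻¹ j j :=
        mul_le_mul (inv_add_smul_one_diag_le hA ht i) (inv_add_smul_one_diag_le hA ht j)
          hinv.diag_nonneg hA.inv.diag_pos.le

lemma measurable_inv_add_smul_one_apply (A : Matrix n n ℝ) (i j : n) :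
    Measurable fun t : ℝ => (A + t • 1)⁻¹ i j := by
  have hcont : Continuous fun t : ℝ => A + t • (1 : Matrix n n ℝ) := by fun_prop
  simp only [inv_def, Ring.inverse_eq_inv', Matrix.smul_apply, smul_eq_mul]
  exact hcont.matrix_det.measurable.inv.mul (hcont.matrix_adjugate.matrix_elem i j).measurable

lemma isStieltjes_const_mul_resolvent_apply (hA : A.PosDef) (i j : n) {c : ℝ}
    (hc : ∀ t : ℝ, 0 ≤ t → 0 ≤ c * (A + t • 1)⁻¹ i j) {μ : Measure ℝ}
    (hμ : IntegrableOn (fun t => (1 + t)⁻¹) (Set.Ici 0) μ) :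
    IsStieltjes fun z =>
      ∫ t in Set.Ici (0 : ℝ), (c * (A + t • 1)⁻¹ i j) * (z + t)⁻¹ ∂μ := by
  refine isStieltjes_setIntegral_mul hc (hμ.bdd_mul (c := |c| * √(A⁻¹ i i * A⁻¹ j j))
    ((measurable_inv_add_smul_one_apply A i j).const_mul c).aestronglyMeasurable ?_)
  filter_upwards [ae_restrict_mem measurableSet_Ici] with t ht
  rw [Real.norm_eq_abs, abs_mul]
  exact mul_le_mul_of_nonneg_left (abs_inv_add_smul_one_apply_le hA ht i j) (abs_nonneg c)

end Resolvent

section Hessenberg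

lemma adjugate_last_zero_of_hessenberg {R : Type*} [CommRing R] {n : ℕ}
    {A : Matrix (Fin (n + 1)) (Fin (n + 1)) R}
    (hA : ∀ i j : Fin (n + 1), (j : ℕ) + 1 < i → A i j = 0) :
    A.adjugate (Fin.last n) 0 = (-1) ^ n * ∏ i : Fin n, A i.succ i.castSucc := by
  have htri : (A.submatrix Fin.succ Fin.castSucc).IsUpperTriangular := fun i j hij =>
    hA _ _ (by simpa using hij)
  rw [adjugate_fin_succ_eq_det_submatrix, Fin.succAbove_last, Fin.succAbove_zero,
    det_of_isUpperTriangular htri]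
  simp

lemma neg_one_pow_mul_inv_last_zero_nonneg {K : Type*} [Field K] [LinearOrder K]
    [IsStrictOrderedRing K] {n : ℕ}
    {A : Matrix (Fin (n + 1)) (Fin (n + 1)) K} (hdet : 0 ≤ A.det)
    (hA : ∀ i j : Fin (n + 1), (j : ℕ) + 1 < i → A i j = 0)
    (hsub : ∀ i : Fin n, 0 ≤ A i.succ i.castSucc) :
    0 ≤ (-1) ^ n * A⁻¹ (Fin.last n) 0 := by
  have hsign : (-1 : K) ^ n * (-1) ^ n = 1 := by simp [← mul_pow]
  have hentry : (-1) ^ n * A⁻¹ (Fin.last n) 0 = A.det⁻¹ * ∏ i : Fin n, A i.succ i.castSucc := by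
    rw [inv_def, Ring.inverse_eq_inv', Matrix.smul_apply, smul_eq_mul,
      adjugate_last_zero_of_hessenberg hA]
    linear_combination (A.det⁻¹ * ∏ i : Fin n, A i.succ i.castSucc) * hsign
  rw [hentry]
  exact mul_nonneg (inv_nonneg.2 hdet) (Finset.prod_nonneg fun i _ => hsub i)

end Hessenberg

section CoupledBlocks

variable {p q R : Type*} [DecidableEq p] [DecidableEq q]

/-- The block diagonal matrix with blocks `A` and `B`, coupled by the entry `β` in the positions
`(a, b)` and `(b, a)`. The matrix `T` of the block matrix setup is the case where `a` is the last
index of `A = T₁` and `b` the first index of `B = S`. -/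
def coupledBlocks [Zero R] (A : Matrix p p R) (B : Matrix q q R) (a : p) (b : q) (β : R) :
    Matrix (p ⊕ q) (p ⊕ q) R :=
  fromBlocks A (single a b β) (single b a β) B

lemma coupledBlocks_eq_fromBlocks_ite [Zero R] (A : Matrix p p R) (B : Matrix q q R) (a : p)
    (b : q) (β : R) : coupledBlocks A B a b β =
      fromBlocks A (of fun i j => if i = a ∧ j = b then β else 0)
        (of fun i j => if i = b ∧ j = a then β else 0) B := by
  simp only [coupledBlocks, single, eq_comm]

lemma coupledBlocks_add_smul_one [CommRing R] (A : Matrix p p R) (B : Matrix q q R) (a : p)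
    (b : q) (β t : R) :
    coupledBlocks A B a b β + t • 1 = coupledBlocks (A + t • 1) (B + t • 1) a b β := by
  simp [coupledBlocks, ← fromBlocks_one, fromBlocks_smul, fromBlocks_add]

section CommRing

variable [Fintype p] [Fintype q] [CommRing R] {A : Matrix p p R} {B : Matrix q q R}
  {a : p} {b : q} {β : R}

lemma fromBlocks_mul_inv_toBlocks {C : Matrix p q R} {D : Matrix q p R}
    (hM : IsUnit (fromBlocks A C D B)) :
    A * (fromBlocks A C D B)⁻¹.toBlocks₁₁ + C * (fromBlocks A C D B)⁻¹.toBlocks₂₁ = 1 ∧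
      D * (fromBlocks A C D B)⁻¹.toBlocks₁₁ + B * (fromBlocks A C D B)⁻¹.toBlocks₂₁ = 0 := by
  have hmul := mul_nonsing_inv _ ((isUnit_iff_isUnit_det _).1 hM)
  rw [← fromBlocks_toBlocks (fromBlocks A C D B)⁻¹, fromBlocks_multiply, ← fromBlocks_one,
    fromBlocks_inj] at hmul
  exact ⟨hmul.1, hmul.2.2.1⟩

lemma toBlocks₁₁_inv_fromBlocks {C : Matrix p q R} {D : Matrix q p R} (hA : IsUnit A)
    (hM : IsUnit (fromBlocks A C D B)) :
    (fromBlocks A C D B)⁻¹.toBlocks₁₁ = A⁻¹ - A⁻¹ * C * (fromBlocks A C D B)⁻¹.toBlocks₂₁ := by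
  rw [← nonsing_inv_mul_cancel_left A (fromBlocks A C D B)⁻¹.toBlocks₁₁
      ((isUnit_iff_isUnit_det A).1 hA),
    eq_sub_of_add_eq (fromBlocks_mul_inv_toBlocks hM).1, Matrix.mul_sub, Matrix.mul_one,
    Matrix.mul_assoc]

lemma toBlocks₂₁_inv_fromBlocks {C : Matrix p q R} {D : Matrix q p R} (hB : IsUnit B)
    (hM : IsUnit (fromBlocks A C D B)) :
    (fromBlocks A C D B)⁻¹.toBlocks₂₁ = -(B⁻¹ * D * (fromBlocks A C D B)⁻¹.toBlocks₁₁) := by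
  rw [← nonsing_inv_mul_cancel_left B (fromBlocks A C D B)⁻¹.toBlocks₂₁
      ((isUnit_iff_isUnit_det B).1 hB),
    eq_neg_of_add_eq_zero_right (fromBlocks_mul_inv_toBlocks hM).2, Matrix.mul_neg,
    Matrix.mul_assoc]

lemma mul_single_mul_apply {l o : Type*} (X : Matrix l p R) (Y : Matrix q o R) (i : p) (j : q)
    (c : R) (k : l) (h : o) : (X * single i j c * Y) k h = X k i * c * Y j h := by
  simp [Matrix.mul_apply, single_apply, ite_and]

lemma inv_coupledBlocks_inr_inl (hB : IsUnit B) (hM : IsUnit (coupledBlocks A B a b β)) (j : p) :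
    (coupledBlocks A B a b β)⁻¹ (.inr b) (.inl j) =
      -(β * B⁻¹ b b * (coupledBlocks A B a b β)⁻¹ (.inl a) (.inl j)) := by
  have h := congrFun₂ (toBlocks₂₁_inv_fromBlocks hB hM) b j
  rw [neg_apply, mul_single_mul_apply] at h
  exact h.trans (by rw [mul_comm β]; rfl)

lemma inv_coupledBlocks_inl_inl_mul (hA : IsUnit A) (hB : IsUnit B)
    (hM : IsUnit (coupledBlocks A B a b β)) (j : p) :
    (coupledBlocks A B a b β)⁻¹ (.inl a) (.inl j) * (1 - β ^ 2 * (A⁻¹ a a * B⁻¹ b b)) =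
      A⁻¹ a j := by
  have h := congrFun₂ (toBlocks₁₁_inv_fromBlocks hA hM) a j
  rw [Matrix.sub_apply, mul_single_mul_apply] at h
  change (coupledBlocks A B a b β)⁻¹ (.inl a) (.inl j) =
    A⁻¹ a j - A⁻¹ a a * β * (coupledBlocks A B a b β)⁻¹ (.inr b) (.inl j) at h
  rw [inv_coupledBlocks_inr_inl hB hM] at h
  linear_combination h

end CommRing

variable {A : Matrix p p ℝ} {B : Matrix q q ℝ} {a : p} {b : q} {β : ℝ}

lemma posDef_left_of_coupledBlocks (hM : (coupledBlocks A B a b β).PosDef) : A.PosDef :=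
  hM.submatrix Sum.inl_injective

lemma posDef_right_of_coupledBlocks (hM : (coupledBlocks A B a b β).PosDef) : B.PosDef :=
  hM.submatrix Sum.inr_injective

variable [Fintype p] [Fintype q]

lemma sq_mul_inv_mul_inv_lt_one (hM : (coupledBlocks A B a b β).PosDef) :
    β ^ 2 * (A⁻¹ a a * B⁻¹ b b) < 1 := by
  have hA := posDef_left_of_coupledBlocks hM
  have hB := posDef_right_of_coupledBlocks hM
  have hpos : 0 < (coupledBlocks A B a b β)⁻¹ (.inl a) (.inl a) *
      (1 - β ^ 2 * (A⁻¹ a a * B⁻¹ b b)) := by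
    rw [inv_coupledBlocks_inl_inl_mul hA.isUnit hB.isUnit hM.isUnit]
    exact hA.inv.diag_pos
  exact sub_pos.1 (pos_of_mul_pos_right hpos hM.inv.diag_pos.le)

lemma inv_mul_inv_sub_one_div_sq_neg (hβ : β ≠ 0) (hM : (coupledBlocks A B a b β).PosDef) :
    A⁻¹ a a * B⁻¹ b b - 1 / β ^ 2 < 0 := by
  rw [sub_neg, lt_div_iff₀' (by positivity)]
  exact sq_mul_inv_mul_inv_lt_one hM

lemma neg_inv_mul_inv_div_eq (hβ : β ≠ 0) (hM : (coupledBlocks A B a b β).PosDef) (j : p) :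
    -(B⁻¹ b b * A⁻¹ a j / (A⁻¹ a a * B⁻¹ b b - 1 / β ^ 2)) =
      -β * (coupledBlocks A B a b β)⁻¹ (.inr b) (.inl j) := by
  have hA := posDef_left_of_coupledBlocks hM
  have hB := posDef_right_of_coupledBlocks hM
  have hd := (inv_mul_inv_sub_one_div_sq_neg hβ hM).ne
  rw [inv_coupledBlocks_inr_inl hB.isUnit hM.isUnit,
    ← inv_coupledBlocks_inl_inl_mul hA.isUnit hB.isUnit hM.isUnit, neg_eq_iff_eq_neg,
    div_eq_iff hd]
  field_simp
  ring

end CoupledBlocks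

lemma neg_one_pow_mul_inv_coupledBlocks_nonneg {n : ℕ} {q : Type*} [Fintype q] [DecidableEq q]
    {A : Matrix (Fin (n + 1)) (Fin (n + 1)) ℝ} {B : Matrix q q ℝ} {b : q} {β : ℝ}
    (hA : ∀ i j : Fin (n + 1), (j : ℕ) + 1 < i → A i j = 0)
    (hsub : ∀ i : Fin n, 0 ≤ A i.succ i.castSucc)
    (hM : (coupledBlocks A B (Fin.last n) b β).PosDef) :
    0 ≤ (-1) ^ n * (-β) * (coupledBlocks A B (Fin.last n) b β)⁻¹ (.inr b) (.inl 0) := by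
  have hApd := posDef_left_of_coupledBlocks hM
  have hBpd := posDef_right_of_coupledBlocks hM
  have hcorner :
      0 ≤ (-1) ^ n * (coupledBlocks A B (Fin.last n) b β)⁻¹ (.inl (.last n)) (.inl 0) := by
    refine nonneg_of_mul_nonneg_left ?_ (sub_pos.2 (sq_mul_inv_mul_inv_lt_one hM))
    rw [mul_assoc, inv_coupledBlocks_inl_inl_mul hApd.isUnit hBpd.isUnit hM.isUnit]
    exact neg_one_pow_mul_inv_last_zero_nonneg hApd.det_pos.le hA hsub
  calc 0 ≤ β ^ 2 * B⁻¹ b b *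
        ((-1) ^ n * (coupledBlocks A B (Fin.last n) b β)⁻¹ (.inl (.last n)) (.inl 0)) :=
        mul_nonneg (mul_nonneg (sq_nonneg β) hBpd.inv.diag_pos.le) hcorner
    _ = _ := by rw [inv_coupledBlocks_inr_inl hBpd.isUnit hM.isUnit]; ring

theorem f1_sign_flip_stieltjes_general {n : ℕ} {q : Type*} [Fintype q] [DecidableEq q]
    (T₁ : Matrix (Fin (n + 1)) (Fin (n + 1)) ℝ) (S : Matrix q q ℝ) (b : q)
    (hhess : ∀ i j : Fin (n + 1), (j : ℕ) + 1 < i → T₁ i j = 0)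
    (hsub : ∀ i : Fin n, 0 ≤ T₁ i.succ i.castSucc) {β : ℝ} (hβ : β ≠ 0)
    (hT : (coupledBlocks T₁ S (Fin.last n) b β).PosDef) {γ δ ε d : ℝ → ℝ}
    (hγ : ∀ t, 0 ≤ t → γ t = (T₁ + t • 1)⁻¹ (Fin.last n) (Fin.last n))
    (hδ : ∀ t, 0 ≤ t → δ t = (S + t • 1)⁻¹ b b)
    (hε : ∀ t, 0 ≤ t → ε t = (T₁ + t • 1)⁻¹ (Fin.last n) 0)
    (hd : ∀ t, 0 ≤ t → d t = γ t * δ t - 1 / β ^ 2)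
    {μ : Measure ℝ} (hμ : IntegrableOn (fun t => (1 + t)⁻¹) (Set.Ici 0) μ) {f₁ : ℝ → ℝ}
    (hf₁ : ∀ z : ℝ, 0 < z →
      f₁ z = ∫ t in Set.Ici (0 : ℝ), (-(δ t * ε t / d t)) * (z + t)⁻¹ ∂μ) :
    IsStieltjes (fun z => (-1) ^ (n + 2) * f₁ z) ∧
    ((∀ z, 0 < z → 0 ≤ f₁ z) ∨ ∀ z, 0 < z → f₁ z ≤ 0) ∧
    (∀ z₁ z₂, 0 < z₁ → z₁ ≤ z₂ → |f₁ z₂| ≤ |f₁ z₁|) := by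
  have hsign : (-1 : ℝ) ^ (n + 2) ≠ 0 := by simp
  have hM : ∀ t : ℝ, 0 ≤ t →
      (coupledBlocks (T₁ + t • 1) (S + t • 1) (Fin.last n) b β).PosDef := fun t ht =>
    coupledBlocks_add_smul_one T₁ S (Fin.last n) b β t ▸ posDef_add_smul_one hT ht
  have hdensity : ∀ t : ℝ, 0 ≤ t → -(δ t * ε t / d t) =
      -β * (coupledBlocks T₁ S (Fin.last n) b β + t • 1)⁻¹ (.inr b) (.inl 0) := fun t ht => by
    rw [hd t ht, hγ t ht, hδ t ht, hε t ht, neg_inv_mul_inv_div_eq hβ (hM t ht),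
      coupledBlocks_add_smul_one]
  have hnonneg : ∀ t : ℝ, 0 ≤ t → 0 ≤ (-1) ^ n * (-β) *
      (coupledBlocks T₁ S (Fin.last n) b β + t • 1)⁻¹ (.inr b) (.inl 0) := fun t ht => by
    rw [coupledBlocks_add_smul_one]
    refine neg_one_pow_mul_inv_coupledBlocks_nonneg (fun i j hij => ?_) (fun i => ?_) (hM t ht)
    · simp [hhess i j hij, show i ≠ j by rintro rfl; omega]
    · simpa [one_apply_ne Fin.castSucc_lt_succ.ne'] using hsub i
  have hstieltjes : IsStieltjes fun z => (-1) ^ (n + 2) * f₁ z := by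
    refine (isStieltjes_const_mul_resolvent_apply hT _ _ hnonneg hμ).congr fun z hz => ?_
    dsimp only
    rw [hf₁ z hz, ← integral_const_mul]
    refine setIntegral_congr_fun measurableSet_Ici fun t ht => ?_
    simp only [hdensity t ht]
    ring
  exact ⟨hstieltjes, hstieltjes.nonneg_or_nonpos_of_const_mul hsign,
    fun z₁ z₂ hz₁ hz =>
      hstieltjes.antitoneOn_abs_of_const_mul hsign hz₁ (hz₁.trans_le hz) hz⟩

/-- **Lemma 3.4 (first part)**: in the block matrix setup
`T = [[T₁, β e_m e₁ᵀ], [β e₁ e_mᵀ, S]]` with `T` positive definite and `T₁` tridiagonal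
with positive subdiagonal entries, and for a positive Borel measure `μ` on `[0,∞)` with
`∫ 1/(1+t) dμ(t) < ∞`, the function
`f₁(z) = ∫ (−δ(t)ε(t)/d(t)) · 1/(z+t) dμ(t)` is such that `(−1)^{m+1} f₁` is a Stieltjes
function; in particular `f₁` has constant sign on `(0,∞)` and `|f₁|` is monotonically
decreasing on `(0,∞)`. -/
theorem f1_sign_flip_stieltjes
    {m k : ℕ} (hm : 1 ≤ m) (hk : 1 ≤ k)
    (T₁ : Matrix (Fin m) (Fin m) ℝ) (S : Matrix (Fin k) (Fin k) ℝ)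
    (hT₁ : T₁.IsSymm) (hS : S.IsSymm)
    (htri : ∀ i j : Fin m, ((i : ℕ) + 1 < (j : ℕ) ∨ (j : ℕ) + 1 < (i : ℕ)) → T₁ i j = 0)
    (hsub : ∀ i : Fin (m - 1),
      0 < T₁ ⟨(i : ℕ) + 1, by have := i.isLt; omega⟩ ⟨(i : ℕ), by have := i.isLt; omega⟩)
    (β : ℝ) (hβ : 0 < β)
    (T : Matrix (Fin m ⊕ Fin k) (Fin m ⊕ Fin k) ℝ)
    (hT : T = Matrix.fromBlocks T₁
      (Matrix.of fun i j => if i = (⟨m - 1, by omega⟩ : Fin m) ∧ j = (⟨0, hk⟩ : Fin k) then β else 0)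
      (Matrix.of fun i j => if i = (⟨0, hk⟩ : Fin k) ∧ j = (⟨m - 1, by omega⟩ : Fin m) then β else 0)
      S)
    (hTpd : T.PosDef)
    (γ δ ε d : ℝ → ℝ)
    (hγ : ∀ t, γ t = (T₁ + t • 1)⁻¹ ⟨m - 1, by omega⟩ ⟨m - 1, by omega⟩)
    (hδ : ∀ t, δ t = (S + t • 1)⁻¹ ⟨0, hk⟩ ⟨0, hk⟩)
    (hε : ∀ t, ε t = (T₁ + t • 1)⁻¹ ⟨m - 1, by omega⟩ ⟨0, hm⟩)
    (hd : ∀ t, d t = γ t * δ t - 1 / β ^ 2)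
    (μ : Measure ℝ)
    (hμ : MeasureTheory.IntegrableOn (fun t => (1 + t)⁻¹) (Set.Ici 0) μ)
    (f₁ : ℝ → ℝ)
    (hf₁ : ∀ z : ℝ, 0 < z →
      f₁ z = ∫ t in Set.Ici (0 : ℝ), (-(δ t * ε t / d t)) * (z + t)⁻¹ ∂μ) :
    (∃ ν : Measure ℝ,
      MeasureTheory.IntegrableOn (fun t => (1 + t)⁻¹) (Set.Ici 0) ν ∧
      ∀ z : ℝ, 0 < z →
        (-1 : ℝ) ^ (m + 1) * f₁ z = ∫ t in Set.Ici (0 : ℝ), (z + t)⁻¹ ∂ν) ∧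
    ((∀ z : ℝ, 0 < z → 0 ≤ f₁ z) ∨ (∀ z : ℝ, 0 < z → f₁ z ≤ 0)) ∧
    (∀ z₁ z₂ : ℝ, 0 < z₁ → z₁ ≤ z₂ → |f₁ z₂| ≤ |f₁ z₁|) := by
  obtain ⟨n, rfl⟩ := Nat.exists_eq_add_of_le' hm
  rw [hT, ← coupledBlocks_eq_fromBlocks_ite] at hTpd
  exact f1_sign_flip_stieltjes_general T₁ S ⟨0, hk⟩ (fun i j hij => htri i j (.inr hij))
    (fun i => (hsub i).le) hβ.ne' hTpd (fun t _ => hγ t) (fun t _ => hδ t) (fun t _ => hε t)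
    (fun t _ => hd t) hμ hf₁
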